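/- arXiv:math/0105118 — 2 statements merged into one kernel-verified Lean document; each statement's English description precedes it below -/
import Mathlib

section
/- Let S₀:ℝ²→ℝ be C² and for j∈{+,−} let a_j,b_j:ℝ²→ℝ be C² functions of (τ,l). Define S_j:=S₀(a_j,b_j), u_j:=∂₁S₀(a_j,b_j), v_j:=∂₂S₀(a_j,b_j), ω_j(τ,l):=∂_τa_j·∂_lb_j − ∂_τb_j·∂_la_j, and define p*, p, i*, i, j*, j by: p* := (b₊−b₋)(∂_τa₊+∂_τa₋)/2 − (a₊−a₋)(∂_τb₊+∂_τb₋)/2, p := (b₊−b₋)(∂_la₊+∂_la₋)/2 − (a₊−a₋)(∂_lb₊+∂_lb₋)/2, i* := (b₊−b₋)(∂_τS₊+∂_τS₋)/2 − (S₊−S₋)(∂_τb₊+∂_τb₋)/2, i := (b₊−b₋)(∂_lS₊+∂_lS₋)/2 − (S₊−S₋)(∂_lb₊+∂_lb₋)/2, j* := (a₊−a₋)(∂_τS₊+∂_τS₋)/2 − (S₊−S₋)(∂_τa₊+∂_τa₋)/2, j := (a₊−a₋)(∂_lS₊+∂_lS₋)/2 − (S₊−S₋)(∂_la₊+∂_la₋)/2.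 Set P̃(t,l):=∫₀ᵗ(ω₊−ω₋)dτ, Ĩ(t,l):=∫₀ᵗ(u₊ω₊−u₋ω₋)dτ, J̃(t,l):=∫₀ᵗ(v₊ω₊−v₋ω₋)dτ. Then for all (t,l): P̃(t,l) = ∂/∂l[∫₀ᵗ p*dτ] − p(t,l) + p(0,l); Ĩ(t,l) = ∂/∂l[∫₀ᵗ i*dτ] − i(t,l) + i(0,l); J̃(t,l) = −∂/∂l[∫₀ᵗ j*dτ] + j(t,l) − j(0,l). -/
/-!
For each of `p`, `i`, `j` the starred and unstarred functions are the two components of a 1-form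
`θ = (g₊ - g₋) d(f₊ + f₋) / 2 - (f₊ - f₋) d(g₊ + g₋) / 2` on the `(τ, l)`-plane, for which
`dθ = -(df₊ ∧ dg₊ - df₋ ∧ dg₋)`: the mixed terms `df₊ ∧ dg₋` cancel. Integrating `dθ` in `τ` over
`[0, t]` turns one half of it into an `l`-derivative of an integral and the other into boundary
terms. This gives `P̃` for `(f, g) = (a, b)`. Since `S = S₀(a, b)` satisfies `dS = u da + v db`,
one has `dS ∧ db = u da ∧ db` and `dS ∧ da = -v da ∧ db`, so `(f, g) = (S, b)` and `(S, a)` give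
`Ĩ` and `-J̃`.
-/

open Function Set

section PartialDerivatives

variable {E : Type*} [NormedAddCommGroup E] [NormedSpace ℝ E] {f : ℝ → ℝ → E} {x y : ℝ}

/-- The partial derivative in the first variable of a curried function of two real variables;
it is `0` where that derivative does not exist. -/
noncomputable def partialFst (f : ℝ → ℝ → E) (x y : ℝ) : E :=
  deriv (fun s => f s y) x

/-- The partial derivative in the second variable of a curried function of two real variables;
it is `0` where that derivative does not exist. -/
noncomputable def partialSnd (f : ℝ → ℝ → E) (x y : ℝ) : E :=
  deriv (fun s => f x s) y

lemma hasDerivAt_fst_fderiv (hf : DifferentiableAt ℝ (uncurry f) (x, y)) :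
    HasDerivAt (fun s => f s y) (fderiv ℝ (uncurry f) (x, y) (1, 0)) x :=
  HasFDerivAt.comp_hasDerivAt (l := uncurry f) x hf.hasFDerivAt
    ((hasDerivAt_id x).prodMk (hasDerivAt_const x y))

lemma hasDerivAt_snd_fderiv (hf : DifferentiableAt ℝ (uncurry f) (x, y)) :
    HasDerivAt (fun s => f x s) (fderiv ℝ (uncurry f) (x, y) (0, 1)) y :=
  HasFDerivAt.comp_hasDerivAt (l := uncurry f) y hf.hasFDerivAt
    ((hasDerivAt_const y x).prodMk (hasDerivAt_id y))

lemma partialFst_eq_fderiv (hf : DifferentiableAt ℝ (uncurry f) (x, y)) :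
    partialFst f x y = fderiv ℝ (uncurry f) (x, y) (1, 0) :=
  (hasDerivAt_fst_fderiv hf).deriv

lemma partialSnd_eq_fderiv (hf : DifferentiableAt ℝ (uncurry f) (x, y)) :
    partialSnd f x y = fderiv ℝ (uncurry f) (x, y) (0, 1) :=
  (hasDerivAt_snd_fderiv hf).deriv

lemma hasDerivAt_partialFst (hf : DifferentiableAt ℝ (uncurry f) (x, y)) :
    HasDerivAt (fun s => f s y) (partialFst f x y) x :=
  (hasDerivAt_fst_fderiv hf).differentiableAt.hasDerivAt

lemma hasDerivAt_partialSnd (hf : DifferentiableAt ℝ (uncurry f) (x, y)) :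
    HasDerivAt (fun s => f x s) (partialSnd f x y) y :=
  (hasDerivAt_snd_fderiv hf).differentiableAt.hasDerivAt

lemma uncurry_partialFst (hf : Differentiable ℝ (uncurry f)) :
    uncurry (partialFst f) = fun p => fderiv ℝ (uncurry f) p (1, 0) :=
  funext fun p => partialFst_eq_fderiv (hf p)

lemma uncurry_partialSnd (hf : Differentiable ℝ (uncurry f)) :
    uncurry (partialSnd f) = fun p => fderiv ℝ (uncurry f) p (0, 1) :=
  funext fun p => partialSnd_eq_fderiv (hf p)

lemma contDiff_partialFst {n : WithTop ℕ∞} (hf : ContDiff ℝ (n + 1) (uncurry f)) :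
    ContDiff ℝ n (uncurry (partialFst f)) := by
  rw [uncurry_partialFst (hf.differentiable (by simp))]
  exact (hf.fderiv_right le_rfl).clm_apply contDiff_const

lemma contDiff_partialSnd {n : WithTop ℕ∞} (hf : ContDiff ℝ (n + 1) (uncurry f)) :
    ContDiff ℝ n (uncurry (partialSnd f)) := by
  rw [uncurry_partialSnd (hf.differentiable (by simp))]
  exact (hf.fderiv_right le_rfl).clm_apply contDiff_const

lemma partialSnd_partialFst_comm (hf : ContDiff ℝ 2 (uncurry f)) (x y : ℝ) :
    partialSnd (partialFst f) x y = partialFst (partialSnd f) x y := by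
  have f_diff : Differentiable ℝ (uncurry f) := hf.differentiable (by simp)
  have fderiv_diff : Differentiable ℝ (fderiv ℝ (uncurry f)) :=
    (hf.fderiv_right (m := 1) (by norm_num)).differentiable (by simp)
  have fderiv_apply (v w : ℝ × ℝ) : fderiv ℝ (fun p => fderiv ℝ (uncurry f) p v) (x, y) w =
      fderiv ℝ (fderiv ℝ (uncurry f)) (x, y) w v := by
    simp [fderiv_clm_apply (fderiv_diff _) (differentiableAt_const v)]
  have symm : IsSymmSndFDerivAt ℝ (uncurry f) (x, y) :=
    hf.contDiffAt.isSymmSndFDerivAt (by simp)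
  rw [partialSnd_eq_fderiv ((contDiff_partialFst (n := 1) hf).differentiable (by simp) _),
    partialFst_eq_fderiv ((contDiff_partialSnd (n := 1) hf).differentiable (by simp) _),
    uncurry_partialFst f_diff, uncurry_partialSnd f_diff, fderiv_apply, fderiv_apply, symm]

lemma contDiff_comp_pair {n : WithTop ℕ∞} {a b : ℝ → ℝ → ℝ} (hf : ContDiff ℝ n (uncurry f))
    (ha : ContDiff ℝ n (uncurry a)) (hb : ContDiff ℝ n (uncurry b)) :
    ContDiff ℝ n (uncurry fun x y => f (a x y) (b x y)) :=
  hf.comp (ha.prodMk hb)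

lemma hasDerivAt_comp_pair {α β : ℝ → ℝ} {α' β' t : ℝ}
    (hf : DifferentiableAt ℝ (uncurry f) (α t, β t))
    (hα : HasDerivAt α α' t) (hβ : HasDerivAt β β' t) :
    HasDerivAt (fun s => f (α s) (β s))
      (α' • partialFst f (α t) (β t) + β' • partialSnd f (α t) (β t)) t := by
  convert! hf.hasFDerivAt.comp_hasDerivAt t (hα.prodMk hβ) using 1
  rw [partialFst_eq_fderiv hf, partialSnd_eq_fderiv hf, ← map_smul, ← map_smul, ← map_add]
  simp

end PartialDerivatives

section Integration

variable {E : Type*} [NormedAddCommGroup E] [NormedSpace ℝ E] {P Q : ℝ → ℝ → E}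

lemma hasDerivAt_integral_partialSnd (hP : ContDiff ℝ 1 (uncurry P)) (a b y : ℝ) :
    HasDerivAt (fun m => ∫ x in a..b, P x m) (∫ x in a..b, partialSnd P x y) y := by
  have P_diff : Differentiable ℝ (uncurry P) := hP.differentiable (by simp)
  have partial_cont : Continuous (uncurry (partialSnd P)) :=
    (contDiff_partialSnd (n := 0) (by simpa using hP)).continuous
  obtain ⟨C, hC⟩ := (isCompact_uIcc.prod (isCompact_closedBall y 1)).exists_bound_of_continuousOn
    (partial_cont.continuousOn (s := uIcc a b ×ˢ Metric.closedBall y 1))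
  have P_slice (m : ℝ) : Continuous fun x => P x m := hP.continuous.comp (.prodMk_left m)
  have partial_slice (m : ℝ) : Continuous fun x => partialSnd P x m :=
    partial_cont.comp (.prodMk_left m)
  exact (intervalIntegral.hasDerivAt_integral_of_dominated_loc_of_deriv_le
    (F := fun m x => P x m) (F' := fun m x => partialSnd P x m) (bound := fun _ => C)
    (Metric.closedBall_mem_nhds y one_pos)
    (.of_forall fun m => (P_slice m).aestronglyMeasurable)
    ((P_slice y).intervalIntegrable _ _) (partial_slice y).aestronglyMeasurable
    (.of_forall fun x hx m hm => hC (x, m) ⟨uIoc_subset_uIcc hx, hm⟩)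
    intervalIntegrable_const
    (.of_forall fun x _ m _ => hasDerivAt_partialSnd (P_diff _))).2

lemma integral_partialSnd_sub_partialFst [CompleteSpace E] (hP : ContDiff ℝ 1 (uncurry P))
    (hQ : ContDiff ℝ 1 (uncurry Q)) (a b y : ℝ) :
    ∫ x in a..b, (partialSnd P x y - partialFst Q x y) =
      deriv (fun m => ∫ x in a..b, P x m) y - Q b y + Q a y := by
  have dP_cont : Continuous fun x => partialSnd P x y :=
    (contDiff_partialSnd (n := 0) (by simpa using hP)).continuous.comp (.prodMk_left y)
  have dQ_cont : Continuous fun x => partialFst Q x y :=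
    (contDiff_partialFst (n := 0) (by simpa using hQ)).continuous.comp (.prodMk_left y)
  have integral_dQ : ∫ x in a..b, partialFst Q x y = Q b y - Q a y :=
    intervalIntegral.integral_eq_sub_of_hasDerivAt
      (fun _ _ => hasDerivAt_partialFst (hQ.differentiable (by simp) _))
      (dQ_cont.intervalIntegrable a b)
  rw [intervalIntegral.integral_sub (dP_cont.intervalIntegrable a b)
    (dQ_cont.intervalIntegrable a b), integral_dQ, (hasDerivAt_integral_partialSnd hP a b y).deriv]
  abel

end Integration

section Jacobian

/-- The Jacobian determinant of `(x, y) ↦ (f x y, g x y)`, i.e. the coefficient of `df ∧ dg`; this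
is `ω_j` for `(f, g) = (a_j, b_j)`. -/
noncomputable def jacobian (f g : ℝ → ℝ → ℝ) (x y : ℝ) : ℝ :=
  partialFst f x y * partialSnd g x y - partialFst g x y * partialSnd f x y

variable {S a b : ℝ → ℝ → ℝ} {x y : ℝ}

lemma jacobian_comp (hS : DifferentiableAt ℝ (uncurry S) (a x y, b x y))
    (ha : DifferentiableAt ℝ (uncurry a) (x, y)) (hb : DifferentiableAt ℝ (uncurry b) (x, y))
    (c : ℝ → ℝ → ℝ) :
    jacobian (fun x y => S (a x y) (b x y)) c x y =
      partialFst S (a x y) (b x y) * jacobian a c x y +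
        partialSnd S (a x y) (b x y) * jacobian b c x y := by
  have fst_comp : partialFst (fun x y => S (a x y) (b x y)) x y = _ :=
    (hasDerivAt_comp_pair (α := (a · y)) (β := (b · y)) hS (hasDerivAt_partialFst ha)
      (hasDerivAt_partialFst hb)).deriv
  have snd_comp : partialSnd (fun x y => S (a x y) (b x y)) x y = _ :=
    (hasDerivAt_comp_pair hS (hasDerivAt_partialSnd ha) (hasDerivAt_partialSnd hb)).deriv
  simp only [jacobian, fst_comp, snd_comp, smul_eq_mul]
  ring

lemma jacobian_comp_snd (hS : DifferentiableAt ℝ (uncurry S) (a x y, b x y))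
    (ha : DifferentiableAt ℝ (uncurry a) (x, y)) (hb : DifferentiableAt ℝ (uncurry b) (x, y)) :
    jacobian (fun x y => S (a x y) (b x y)) b x y =
      partialFst S (a x y) (b x y) * jacobian a b x y := by
  rw [jacobian_comp hS ha hb, jacobian, jacobian]
  ring

lemma jacobian_comp_fst (hS : DifferentiableAt ℝ (uncurry S) (a x y, b x y))
    (ha : DifferentiableAt ℝ (uncurry a) (x, y)) (hb : DifferentiableAt ℝ (uncurry b) (x, y)) :
    jacobian (fun x y => S (a x y) (b x y)) a x y =
      -(partialSnd S (a x y) (b x y) * jacobian a b x y) := by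
  rw [jacobian_comp hS ha hb, jacobian, jacobian, jacobian]
  ring

end Jacobian

section JumpForm

/-- The component along `D` of the 1-form
`(gP - gM) d(fP + fM) / 2 - (fP - fM) d(gP + gM) / 2`. With `D = partialFst` it is the paper's
`p*`, `i*`, `j*`, and with `D = partialSnd` it is `p`, `i`, `j`, for `(f, g) = (a, b)`, `(S, b)`,
`(S, a)` respectively. -/
noncomputable def jumpForm (D : (ℝ → ℝ → ℝ) → ℝ → ℝ → ℝ) (fP gP fM gM : ℝ → ℝ → ℝ) (x y : ℝ) : ℝ :=
  (gP x y - gM x y) * (D fP x y + D fM x y) / 2 - (fP x y - fM x y) * (D gP x y + D gM x y) / 2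

variable {fP gP fM gM : ℝ → ℝ → ℝ}

lemma contDiff_jumpForm {n : WithTop ℕ∞} {D : (ℝ → ℝ → ℝ) → ℝ → ℝ → ℝ}
    (hD : ∀ f, ContDiff ℝ (n + 1) (uncurry f) → ContDiff ℝ n (uncurry (D f)))
    (hfP : ContDiff ℝ (n + 1) (uncurry fP)) (hgP : ContDiff ℝ (n + 1) (uncurry gP))
    (hfM : ContDiff ℝ (n + 1) (uncurry fM)) (hgM : ContDiff ℝ (n + 1) (uncurry gM)) :
    ContDiff ℝ n (uncurry (jumpForm D fP gP fM gM)) :=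
  have jump_contDiff {f g : ℝ → ℝ → ℝ} (hf : ContDiff ℝ (n + 1) (uncurry f))
      (hg : ContDiff ℝ (n + 1) (uncurry g)) : ContDiff ℝ n fun p => uncurry f p - uncurry g p :=
    (hf.sub hg).of_le le_self_add
  (((jump_contDiff hgP hgM).mul ((hD _ hfP).add (hD _ hfM))).div_const 2).sub
    (((jump_contDiff hfP hfM).mul ((hD _ hgP).add (hD _ hgM))).div_const 2)

lemma partialSnd_jumpForm_sub_partialFst_jumpForm
    (hfP : ContDiff ℝ 2 (uncurry fP)) (hgP : ContDiff ℝ 2 (uncurry gP))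
    (hfM : ContDiff ℝ 2 (uncurry fM)) (hgM : ContDiff ℝ 2 (uncurry gM)) (x y : ℝ) :
    partialSnd (jumpForm partialFst fP gP fM gM) x y -
        partialFst (jumpForm partialSnd fP gP fM gM) x y =
      jacobian fP gP x y - jacobian fM gM x y := by
  have d₁ {f : ℝ → ℝ → ℝ} (hf : ContDiff ℝ 2 (uncurry f)) :
      HasDerivAt (fun s => f s y) (partialFst f x y) x :=
    hasDerivAt_partialFst (hf.differentiable (by simp) (x, y))
  have d₂ {f : ℝ → ℝ → ℝ} (hf : ContDiff ℝ 2 (uncurry f)) :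
      HasDerivAt (fun s => f x s) (partialSnd f x y) y :=
    hasDerivAt_partialSnd (hf.differentiable (by simp) (x, y))
  have d₂₁ {f : ℝ → ℝ → ℝ} (hf : ContDiff ℝ 2 (uncurry f)) :
      HasDerivAt (fun s => partialFst f x s) (partialSnd (partialFst f) x y) y :=
    hasDerivAt_partialSnd ((contDiff_partialFst (n := 1) hf).differentiable (by simp) (x, y))
  have d₁₂ {f : ℝ → ℝ → ℝ} (hf : ContDiff ℝ 2 (uncurry f)) :
      HasDerivAt (fun s => partialSnd f s y) (partialFst (partialSnd f) x y) x :=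
    hasDerivAt_partialFst ((contDiff_partialSnd (n := 1) hf).differentiable (by simp) (x, y))
  have snd_eq : partialSnd (jumpForm partialFst fP gP fM gM) x y = _ :=
    (((((d₂ hgP).sub (d₂ hgM)).mul ((d₂₁ hfP).add (d₂₁ hfM))).div_const 2).sub
      ((((d₂ hfP).sub (d₂ hfM)).mul ((d₂₁ hgP).add (d₂₁ hgM))).div_const 2)).deriv
  have fst_eq : partialFst (jumpForm partialSnd fP gP fM gM) x y = _ :=
    (((((d₁ hgP).sub (d₁ hgM)).mul ((d₁₂ hfP).add (d₁₂ hfM))).div_const 2).sub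
      ((((d₁ hfP).sub (d₁ hfM)).mul ((d₁₂ hgP).add (d₁₂ hgM))).div_const 2)).deriv
  rw [snd_eq, fst_eq]
  simp only [jacobian, partialSnd_partialFst_comm, hfP, hgP, hfM, hgM, Pi.add_apply, Pi.sub_apply]
  ring

theorem integral_jacobian_sub
    (hfP : ContDiff ℝ 2 (uncurry fP)) (hgP : ContDiff ℝ 2 (uncurry gP))
    (hfM : ContDiff ℝ 2 (uncurry fM)) (hgM : ContDiff ℝ 2 (uncurry gM)) (t₀ t l : ℝ) :
    ∫ τ in t₀..t, (jacobian fP gP τ l - jacobian fM gM τ l) =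
      deriv (fun m => ∫ τ in t₀..t, jumpForm partialFst fP gP fM gM τ m) l -
        jumpForm partialSnd fP gP fM gM t l + jumpForm partialSnd fP gP fM gM t₀ l := by
  simp only [← partialSnd_jumpForm_sub_partialFst_jumpForm hfP hgP hfM hgM]
  exact integral_partialSnd_sub_partialFst
    (contDiff_jumpForm (fun _ => contDiff_partialFst) hfP hgP hfM hgM)
    (contDiff_jumpForm (fun _ => contDiff_partialSnd) hfP hgP hfM hgM) t₀ t l

end JumpForm

section Potential

variable {S aP bP aM bM : ℝ → ℝ → ℝ}

theorem integral_partialFst_mul_jacobian_sub (hS : ContDiff ℝ 2 (uncurry S))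
    (haP : ContDiff ℝ 2 (uncurry aP)) (hbP : ContDiff ℝ 2 (uncurry bP))
    (haM : ContDiff ℝ 2 (uncurry aM)) (hbM : ContDiff ℝ 2 (uncurry bM)) (t₀ t l : ℝ) :
    let SP := fun τ l => S (aP τ l) (bP τ l)
    let SM := fun τ l => S (aM τ l) (bM τ l)
    ∫ τ in t₀..t, (partialFst S (aP τ l) (bP τ l) * jacobian aP bP τ l -
        partialFst S (aM τ l) (bM τ l) * jacobian aM bM τ l) =
      deriv (fun m => ∫ τ in t₀..t, jumpForm partialFst SP bP SM bM τ m) l -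
        jumpForm partialSnd SP bP SM bM t l + jumpForm partialSnd SP bP SM bM t₀ l := by
  intro SP SM
  have jacobian_S_snd {a b : ℝ → ℝ → ℝ} (ha : ContDiff ℝ 2 (uncurry a))
      (hb : ContDiff ℝ 2 (uncurry b)) (τ : ℝ) :
      jacobian (fun τ l => S (a τ l) (b τ l)) b τ l =
        partialFst S (a τ l) (b τ l) * jacobian a b τ l :=
    jacobian_comp_snd (hS.differentiable (by simp) _)
      (ha.differentiable (by simp) _) (hb.differentiable (by simp) _)
  simp only [← jacobian_S_snd haP hbP, ← jacobian_S_snd haM hbM]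
  exact integral_jacobian_sub (contDiff_comp_pair hS haP hbP) hbP
    (contDiff_comp_pair hS haM hbM) hbM t₀ t l

theorem integral_partialSnd_mul_jacobian_sub (hS : ContDiff ℝ 2 (uncurry S))
    (haP : ContDiff ℝ 2 (uncurry aP)) (hbP : ContDiff ℝ 2 (uncurry bP))
    (haM : ContDiff ℝ 2 (uncurry aM)) (hbM : ContDiff ℝ 2 (uncurry bM)) (t₀ t l : ℝ) :
    let SP := fun τ l => S (aP τ l) (bP τ l)
    let SM := fun τ l => S (aM τ l) (bM τ l)
    ∫ τ in t₀..t, (partialSnd S (aP τ l) (bP τ l) * jacobian aP bP τ l -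
        partialSnd S (aM τ l) (bM τ l) * jacobian aM bM τ l) =
      -deriv (fun m => ∫ τ in t₀..t, jumpForm partialFst SP aP SM aM τ m) l +
        jumpForm partialSnd SP aP SM aM t l - jumpForm partialSnd SP aP SM aM t₀ l := by
  intro SP SM
  have jacobian_S_fst {a b : ℝ → ℝ → ℝ} (ha : ContDiff ℝ 2 (uncurry a))
      (hb : ContDiff ℝ 2 (uncurry b)) (τ : ℝ) :
      jacobian (fun τ l => S (a τ l) (b τ l)) a τ l =
        -(partialSnd S (a τ l) (b τ l) * jacobian a b τ l) :=
    jacobian_comp_fst (hS.differentiable (by simp) _)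
      (ha.differentiable (by simp) _) (hb.differentiable (by simp) _)
  calc
    _ = -∫ τ in t₀..t, (jacobian SP aP τ l - jacobian SM aM τ l) := by
      rw [← intervalIntegral.integral_neg]
      simp only [SP, SM, jacobian_S_fst haP hbP, jacobian_S_fst haM hbM, neg_sub_neg, neg_sub]
    _ = -(deriv (fun m => ∫ τ in t₀..t, jumpForm partialFst SP aP SM aM τ m) l -
        jumpForm partialSnd SP aP SM aM t l + jumpForm partialSnd SP aP SM aM t₀ l) :=
      congrArg Neg.neg (integral_jacobian_sub (contDiff_comp_pair hS haP hbP) haP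
        (contDiff_comp_pair hS haM hbM) haM t₀ t l)
    _ = _ := by ring

end Potential

/-- Theorem 3.2 of the paper (ρ₀ ≡ 1, potential initial velocity): integral
representations of the accumulated shock mass and momenta `P̃, Ĩ, J̃`. -/
theorem stmt_4 (S₀ : ℝ → ℝ → ℝ)
    (hS₀ : ContDiff ℝ 2 fun p : ℝ × ℝ => S₀ p.1 p.2)
    (aP bP aM bM : ℝ → ℝ → ℝ)
    (haP : ContDiff ℝ 2 fun p : ℝ × ℝ => aP p.1 p.2)
    (hbP : ContDiff ℝ 2 fun p : ℝ × ℝ => bP p.1 p.2)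
    (haM : ContDiff ℝ 2 fun p : ℝ × ℝ => aM p.1 p.2)
    (hbM : ContDiff ℝ 2 fun p : ℝ × ℝ => bM p.1 p.2)
    (SP SM uP uM vP vM ωP ωM pstar pp istar ii jstar jj : ℝ → ℝ → ℝ)
    (hSP : ∀ τ l, SP τ l = S₀ (aP τ l) (bP τ l))
    (hSM : ∀ τ l, SM τ l = S₀ (aM τ l) (bM τ l))
    (huP : ∀ τ l, uP τ l = deriv (fun s => S₀ s (bP τ l)) (aP τ l))
    (huM : ∀ τ l, uM τ l = deriv (fun s => S₀ s (bM τ l)) (aM τ l))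
    (hvP : ∀ τ l, vP τ l = deriv (fun m => S₀ (aP τ l) m) (bP τ l))
    (hvM : ∀ τ l, vM τ l = deriv (fun m => S₀ (aM τ l) m) (bM τ l))
    (hωP : ∀ τ l, ωP τ l =
      deriv (fun s => aP s l) τ * deriv (fun m => bP τ m) l -
      deriv (fun s => bP s l) τ * deriv (fun m => aP τ m) l)
    (hωM : ∀ τ l, ωM τ l =
      deriv (fun s => aM s l) τ * deriv (fun m => bM τ m) l -
      deriv (fun s => bM s l) τ * deriv (fun m => aM τ m) l)
    (hpstar : ∀ τ l, pstar τ l =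
      (bP τ l - bM τ l) * (deriv (fun s => aP s l) τ + deriv (fun s => aM s l) τ) / 2 -
      (aP τ l - aM τ l) * (deriv (fun s => bP s l) τ + deriv (fun s => bM s l) τ) / 2)
    (hpp : ∀ τ l, pp τ l =
      (bP τ l - bM τ l) * (deriv (fun m => aP τ m) l + deriv (fun m => aM τ m) l) / 2 -
      (aP τ l - aM τ l) * (deriv (fun m => bP τ m) l + deriv (fun m => bM τ m) l) / 2)
    (histar : ∀ τ l, istar τ l =
      (bP τ l - bM τ l) * (deriv (fun s => SP s l) τ + deriv (fun s => SM s l) τ) / 2 -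
      (SP τ l - SM τ l) * (deriv (fun s => bP s l) τ + deriv (fun s => bM s l) τ) / 2)
    (hii : ∀ τ l, ii τ l =
      (bP τ l - bM τ l) * (deriv (fun m => SP τ m) l + deriv (fun m => SM τ m) l) / 2 -
      (SP τ l - SM τ l) * (deriv (fun m => bP τ m) l + deriv (fun m => bM τ m) l) / 2)
    (hjstar : ∀ τ l, jstar τ l =
      (aP τ l - aM τ l) * (deriv (fun s => SP s l) τ + deriv (fun s => SM s l) τ) / 2 -
      (SP τ l - SM τ l) * (deriv (fun s => aP s l) τ + deriv (fun s => aM s l) τ) / 2)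
    (hjj : ∀ τ l, jj τ l =
      (aP τ l - aM τ l) * (deriv (fun m => SP τ m) l + deriv (fun m => SM τ m) l) / 2 -
      (SP τ l - SM τ l) * (deriv (fun m => aP τ m) l + deriv (fun m => aM τ m) l) / 2)
    (Pt It Jt : ℝ → ℝ → ℝ)
    (hPt : ∀ t l, Pt t l = ∫ τ in (0:ℝ)..t, (ωP τ l - ωM τ l))
    (hIt : ∀ t l, It t l = ∫ τ in (0:ℝ)..t, (uP τ l * ωP τ l - uM τ l * ωM τ l))
    (hJt : ∀ t l, Jt t l = ∫ τ in (0:ℝ)..t, (vP τ l * ωP τ l - vM τ l * ωM τ l)) :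
    ∀ t l : ℝ,
      Pt t l = deriv (fun m => ∫ τ in (0:ℝ)..t, pstar τ m) l - pp t l + pp 0 l ∧
      It t l = deriv (fun m => ∫ τ in (0:ℝ)..t, istar τ m) l - ii t l + ii 0 l ∧
      Jt t l = -deriv (fun m => ∫ τ in (0:ℝ)..t, jstar τ m) l + jj t l - jj 0 l := by
  intro t l
  simp only [hPt, hIt, hJt, hpstar, hpp, histar, hii, hjstar, hjj, hωP, hωM, huP, huM, hvP, hvM,
    hSP, hSM]
  exact ⟨integral_jacobian_sub haP hbP haM hbM 0 t l,
    integral_partialFst_mul_jacobian_sub hS₀ haP hbP haM hbM 0 t l,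
    integral_partialSnd_mul_jacobian_sub hS₀ haP hbP haM hbM 0 t l⟩
end

section
/- In the setting of the previous system, assume additionally that x and y are C², that u·J(0,l) − v·I(0,l) = 0 for all l, that (u,v)≠(0,0), and that there is a function k(t,l) with I = k·u and J = k·v. Then: (i) ∂_t(u·∂_ly − v·∂_lx) = 0, so G(l) := u·∂_ly(t,l) − v·∂_lx(t,l) is independent of t; (ii) setting k̂ := k/P, one has ∂_tP + G(l)·(k̂(ρ−ρ̃) − ρ) = 0 and ∂_t(P·k̂) + ρ·G(l)·(k̂ − 1) = 0. -/
/-!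
Since the momentum is parallel to `(u, v)`, the shock moves with velocity `(k / P) (u, v)`, so the
cross product of `(u, v)` with the velocity vanishes. Differentiating in `l` and exchanging the
partial derivatives shows that the cross product `G` of `(u, v)` with the tangent vector
`(∂ₗx, ∂ₗy)` does not depend on `t`. All fluxes in the system are multiples of `G`, and the two
momentum equations are `u` and `v` times one and the same scalar equation for `k = P * (k / P)`.
-/

open Filter Function Set Topology

section MixedPartials

variable {𝕜 : Type*} [NontriviallyNormedField 𝕜]
  {E : Type*} [NormedAddCommGroup E] [NormedSpace 𝕜 E]
  {F : Type*} [NormedAddCommGroup F] [NormedSpace 𝕜 F]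

lemma hasDerivAt_prodMk_left (t l : 𝕜) : HasDerivAt (fun s : 𝕜 => (s, l)) (1, 0) t :=
  (hasDerivAt_id t).prodMk (hasDerivAt_const t l)

lemma hasDerivAt_prodMk_right (t l : 𝕜) : HasDerivAt (fun m : 𝕜 => (t, m)) (0, 1) l :=
  (hasDerivAt_const l t).prodMk (hasDerivAt_id l)

lemma hasDerivAt_fderiv_comp_apply {g : E → F} {c : 𝕜 → E} {c' : E} {t : 𝕜}
    (hg : DifferentiableAt 𝕜 (fderiv 𝕜 g) (c t)) (hc : HasDerivAt c c' t) (w : E) :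
    HasDerivAt (fun s => fderiv 𝕜 g (c s) w) (fderiv 𝕜 (fderiv 𝕜 g) (c t) c' w) t := by
  simpa using (hg.hasFDerivAt.comp_hasDerivAt t hc).clm_apply (hasDerivAt_const t w)

variable {f : 𝕜 → 𝕜 → F} {t l : 𝕜}

lemma deriv_left_eq_fderiv_uncurry (hf : DifferentiableAt 𝕜 (uncurry f) (t, l)) :
    deriv (fun s => f s l) t = fderiv 𝕜 (uncurry f) (t, l) (1, 0) :=
  (hf.hasFDerivAt.comp_hasDerivAt (f := fun s => (s, l)) t (hasDerivAt_prodMk_left t l)).deriv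

lemma deriv_right_eq_fderiv_uncurry (hf : DifferentiableAt 𝕜 (uncurry f) (t, l)) :
    deriv (f t) l = fderiv 𝕜 (uncurry f) (t, l) (0, 1) :=
  (hf.hasFDerivAt.comp_hasDerivAt l (hasDerivAt_prodMk_right t l)).deriv

theorem hasDerivAt_deriv_comm_of_contDiffAt {n : WithTop ℕ∞}
    (hf : ContDiffAt 𝕜 n (uncurry f) (t, l)) (hn : minSmoothness 𝕜 2 ≤ n) :
    HasDerivAt (fun s => deriv (f s) l) (deriv (fun m => deriv (fun s => f s m) t) l) t := by
  have hf₂ : ContDiffAt 𝕜 2 (uncurry f) (t, l) := hf.of_le (le_minSmoothness.trans hn)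
  have hf_diff : ∀ᶠ p in 𝓝 (t, l), DifferentiableAt 𝕜 (uncurry f) p :=
    (hf₂.eventually (by simp)).mono fun p hp => hp.differentiableAt (by simp)
  have hf'_diff : DifferentiableAt 𝕜 (fderiv 𝕜 (uncurry f)) (t, l) :=
    (hf₂.fderiv_right (m := 1) (by norm_num)).differentiableAt one_ne_zero
  have deriv_right : (fun s => deriv (f s) l) =ᶠ[𝓝 t]
      fun s => fderiv 𝕜 (uncurry f) (s, l) (0, 1) :=
    ((hasDerivAt_prodMk_left t l).continuousAt.eventually hf_diff).mono
      fun s hs => deriv_right_eq_fderiv_uncurry hs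
  have deriv_left : (fun m => deriv (fun s => f s m) t) =ᶠ[𝓝 l]
      fun m => fderiv 𝕜 (uncurry f) (t, m) (1, 0) :=
    ((hasDerivAt_prodMk_right t l).continuousAt.eventually hf_diff).mono
      fun m hm => deriv_left_eq_fderiv_uncurry hm
  rw [deriv_left.deriv_eq,
    (hasDerivAt_fderiv_comp_apply hf'_diff (hasDerivAt_prodMk_right t l) (1, 0)).deriv,
    (hf.isSymmSndFDerivAt hn).eq]
  exact (hasDerivAt_fderiv_comp_apply (c := fun s => (s, l)) hf'_diff
    (hasDerivAt_prodMk_left t l) (0, 1)).congr_of_eventuallyEq deriv_right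

end MixedPartials

section OneVariable

lemma eq_of_hasDerivWithinAt_zero {𝕜 E : Type*} [RCLike 𝕜] [NormedAddCommGroup E] [NormedSpace 𝕜 E]
    {f : 𝕜 → E} {s : Set 𝕜} (hs : Convex ℝ s) (hf : ∀ z ∈ s, HasDerivWithinAt f 0 s z)
    {a b : 𝕜} (ha : a ∈ s) (hb : b ∈ s) : f a = f b := by
  have norm_le : ‖f a - f b‖ ≤ 0 * ‖a - b‖ :=
    hs.norm_image_sub_le_of_norm_hasDerivWithin_le hf (fun _ _ => norm_zero.le) hb ha
  rwa [zero_mul, norm_le_zero_iff, sub_eq_zero] at norm_le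

variable {𝕜 : Type*} [NontriviallyNormedField 𝕜] {t : 𝕜}

lemma deriv_mul_div_cancel_left {p k : 𝕜 → 𝕜} (hp : ContinuousAt p t) (hpt : p t ≠ 0) :
    deriv (fun s => p s * (k s / p s)) t = deriv k t :=
  EventuallyEq.deriv_eq ((hp.eventually_ne hpt).mono fun s hs => mul_div_cancel₀ (k s) hs)

lemma deriv_add_eq_zero_of_mul_const {k : 𝕜 → 𝕜} {a u v : 𝕜} (huv : (u, v) ≠ (0, 0))
    (hu : deriv (fun s => k s * u) t + a * u = 0) (hv : deriv (fun s => k s * v) t + a * v = 0) :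
    deriv k t + a = 0 := by
  rw [deriv_mul_const_field, ← add_mul] at hu hv
  exact (smul_eq_zero.mp (Prod.ext hu hv : (deriv k t + a) • (u, v) = 0)).resolve_right huv

end OneVariable

section Shock

/-- The cross product of the velocity `(u, v)` with the tangent vector `(∂ₗx, ∂ₗy)` to the shock
curve `l ↦ (x t l, y t l)` at time `t`; it is the quantity `G` of the reduced system. -/
noncomputable def crossTangent {𝕜 : Type*} [NontriviallyNormedField 𝕜] (u v : 𝕜)
    (x y : 𝕜 → 𝕜 → 𝕜) (t l : 𝕜) : 𝕜 :=
  u * deriv (y t) l - v * deriv (x t) l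

variable {𝕜 : Type*} [NontriviallyNormedField 𝕜] {u v : 𝕜} {x y : 𝕜 → 𝕜 → 𝕜} {t l : 𝕜}

lemma hasDerivAt_crossTangent_zero_of_parallel {n : WithTop ℕ∞} (hn : minSmoothness 𝕜 2 ≤ n)
    (hx : ContDiffAt 𝕜 n (uncurry x) (t, l)) (hy : ContDiffAt 𝕜 n (uncurry y) (t, l)) {c : 𝕜 → 𝕜}
    (hxt : ∀ m, deriv (fun s => x s m) t = c m * u)
    (hyt : ∀ m, deriv (fun s => y s m) t = c m * v) :
    HasDerivAt (fun s => crossTangent u v x y s l) 0 t := by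
  have hx' : HasDerivAt (fun s => deriv (x s) l) (deriv c l * u) t := by
    simpa only [hxt, deriv_mul_const_field] using hasDerivAt_deriv_comm_of_contDiffAt hx hn
  have hy' : HasDerivAt (fun s => deriv (y s) l) (deriv c l * v) t := by
    simpa only [hyt, deriv_mul_const_field] using hasDerivAt_deriv_comm_of_contDiffAt hy hn
  exact ((hy'.const_mul u).sub (hx'.const_mul v)).congr_deriv (by ring)

end Shock

/-- Reduction of the intra-shock system (29) to the closed 1-D system (33) when
the first integral `uJ - vI` vanishes identically at `t = 0`. -/
theorem stmt_8 (u v ρ ρt T : ℝ) (hT : 0 < T)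
    (P I J x y : ℝ → ℝ → ℝ)
    (hPpos : ∀ t ∈ Set.Ico (0:ℝ) T, ∀ l : ℝ, 0 < P t l)
    (hPd : ∀ t ∈ Set.Ico (0:ℝ) T, ∀ l : ℝ, DifferentiableAt ℝ (fun s => P s l) t)
    (hId : ∀ t ∈ Set.Ico (0:ℝ) T, ∀ l : ℝ, DifferentiableAt ℝ (fun s => I s l) t)
    (hJd : ∀ t ∈ Set.Ico (0:ℝ) T, ∀ l : ℝ, DifferentiableAt ℝ (fun s => J s l) t)
    (hxC2 : ContDiff ℝ 2 fun p : ℝ × ℝ => x p.1 p.2)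
    (hyC2 : ContDiff ℝ 2 fun p : ℝ × ℝ => y p.1 p.2)
    (heqP : ∀ t ∈ Set.Ico (0:ℝ) T, ∀ l : ℝ,
      deriv (fun s => P s l) t +
        (ρ - ρt) * (deriv (fun m => y t m) l * (I t l / P t l) -
          deriv (fun m => x t m) l * (J t l / P t l)) -
        ρ * (deriv (fun m => y t m) l * u - deriv (fun m => x t m) l * v) = 0)
    (heqI : ∀ t ∈ Set.Ico (0:ℝ) T, ∀ l : ℝ,
      deriv (fun s => I s l) t +
        ρ * u * (deriv (fun m => y t m) l * (I t l / P t l) -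
          deriv (fun m => x t m) l * (J t l / P t l)) -
        ρ * u * (deriv (fun m => y t m) l * u - deriv (fun m => x t m) l * v) = 0)
    (heqJ : ∀ t ∈ Set.Ico (0:ℝ) T, ∀ l : ℝ,
      deriv (fun s => J s l) t +
        ρ * v * (deriv (fun m => y t m) l * (I t l / P t l) -
          deriv (fun m => x t m) l * (J t l / P t l)) -
        ρ * v * (deriv (fun m => y t m) l * u - deriv (fun m => x t m) l * v) = 0)
    (hxt : ∀ t ∈ Set.Ico (0:ℝ) T, ∀ l : ℝ,
      deriv (fun s => x s l) t = I t l / P t l)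
    (hyt : ∀ t ∈ Set.Ico (0:ℝ) T, ∀ l : ℝ,
      deriv (fun s => y s l) t = J t l / P t l)
    (hC0 : ∀ l : ℝ, u * J 0 l - v * I 0 l = 0)
    (huv : (u, v) ≠ ((0 : ℝ), (0 : ℝ)))
    (k : ℝ → ℝ → ℝ)
    (hk : ∀ t l : ℝ, I t l = k t l * u ∧ J t l = k t l * v) :
    (∀ t ∈ Set.Ico (0:ℝ) T, ∀ l : ℝ,
      HasDerivAt (fun s => u * deriv (fun m => y s m) l -
        v * deriv (fun m => x s m) l) 0 t ∧
      u * deriv (fun m => y t m) l - v * deriv (fun m => x t m) l =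
        u * deriv (fun m => y 0 m) l - v * deriv (fun m => x 0 m) l) ∧
    (∀ t ∈ Set.Ico (0:ℝ) T, ∀ l : ℝ,
      deriv (fun s => P s l) t +
        (u * deriv (fun m => y 0 m) l - v * deriv (fun m => x 0 m) l) *
          ((k t l / P t l) * (ρ - ρt) - ρ) = 0 ∧
      deriv (fun s => P s l * (k s l / P s l)) t +
        ρ * (u * deriv (fun m => y 0 m) l - v * deriv (fun m => x 0 m) l) *
          (k t l / P t l - 1) = 0) := by
  have hI : ∀ t l, I t l = k t l * u := fun t l => (hk t l).1
  have hJ : ∀ t l, J t l = k t l * v := fun t l => (hk t l).2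
  simp only [hI, hJ, mul_div_right_comm] at heqP heqI heqJ hxt hyt
  have hG : ∀ t ∈ Ico 0 T, ∀ l, HasDerivAt (fun s => crossTangent u v x y s l) 0 t :=
    fun t ht l => hasDerivAt_crossTangent_zero_of_parallel (by simp)
      hxC2.contDiffAt hyC2.contDiffAt (hxt t ht) (hyt t ht)
  have hG_eq : ∀ t ∈ Ico 0 T, ∀ l, crossTangent u v x y t l = crossTangent u v x y 0 l :=
    fun t ht l => eq_of_hasDerivWithinAt_zero (convex_Ico 0 T)
      (fun s hs => (hG s hs l).hasDerivWithinAt) ht ⟨le_rfl, hT⟩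
  refine ⟨fun t ht l => ⟨hG t ht l, hG_eq t ht l⟩, fun t ht l => ?_⟩
  specialize hG_eq t ht l
  unfold crossTangent at hG_eq
  rw [← hG_eq]
  constructor
  · linear_combination heqP t ht l
  · rw [deriv_mul_div_cancel_left (hPd t ht l).continuousAt (hPpos t ht l).ne']
    apply deriv_add_eq_zero_of_mul_const huv
    · linear_combination heqI t ht l
    · linear_combination heqJ t ht l
end
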